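/- Let n = 135 and let x, y ∈ S_135 be the permutations given in the context, with z = (x·y)⁻¹. Then (x, y, z) is a nice triple; the cycle types of x, y, z are 9^15, 2^52 and 4^30·2^6 respectively; and the subgroup ⟨x, y⟩ of S_135 has cardinality 174182400 (the order of the simple group O+(8,2)). -/

import Mathlib

/-- `permInd s` = (sum of the cycle type of `s`) − (number of entries of the cycle type of `s`),
i.e. `n` minus the number of cycles of `s` when fixed points are counted as cycles. -/
def permInd {n : ℕ} (s : Equiv.Perm (Fin n)) : ℕ :=
  s.cycleType.sum - Multiset.card s.cycleType

/-- A `MulAction` is preprimitive if it is pretransitive and every block is trivial. -/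
def IsPreprimitive (G : Type*) (X : Type*) [Group G] [MulAction G X] : Prop :=
  MulAction.IsPretransitive G X ∧
    ∀ B : Set X, MulAction.IsBlock G B → MulAction.IsTrivialBlock B

/-- A triple `(x, y, z)` of permutations in `S_n` is *nice*:
(i) `x * y * z = 1`; (ii) `G = ⟨x, y⟩` is neither the alternating nor the symmetric group;
(iii) `G` acts primitively on `Fin n` and is almost simple; (iv) the triple has genus 0;
(v) the triple is rigid in `G`; (vi) `x`, `y`, `z` lie in rational conjugacy classes of `G`. -/
def IsNice {n : ℕ} (x y z : Equiv.Perm (Fin n)) : Prop :=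
  x * y * z = 1 ∧
  (Subgroup.closure {x, y} ≠ alternatingGroup (Fin n) ∧
    Subgroup.closure {x, y} ≠ ⊤) ∧
  IsPreprimitive (Subgroup.closure {x, y}) (Fin n) ∧
  (∃ S : Subgroup (Subgroup.closure {x, y}), S.Normal ∧ IsSimpleGroup S ∧
    (∃ a b : S, a * b ≠ b * a) ∧
    Subgroup.centralizer (S : Set (Subgroup.closure {x, y})) = ⊥) ∧
  permInd x + permInd y + permInd z = 2 * (n - 1) ∧
  (∀ x' y' z' : Equiv.Perm (Fin n),
    x' * y' * z' = 1 →
    Subgroup.closure {x', y'} = Subgroup.closure {x, y} →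
    (∃ g ∈ Subgroup.closure {x, y}, g * x * g⁻¹ = x') →
    (∃ g ∈ Subgroup.closure {x, y}, g * y * g⁻¹ = y') →
    (∃ g ∈ Subgroup.closure {x, y}, g * z * g⁻¹ = z') →
    ∃ g ∈ Subgroup.closure {x, y},
      g * x * g⁻¹ = x' ∧ g * y * g⁻¹ = y' ∧ g * z * g⁻¹ = z') ∧
  ∀ g ∈ ({x, y, z} : Set (Equiv.Perm (Fin n))), ∀ k : ℤ,
    Int.gcd k (orderOf g) = 1 →
    ∃ h ∈ Subgroup.closure {x, y}, h * g * h⁻¹ = g ^ k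

/-- The permutation given by a list of (disjoint) cycles, each written as a list of points. -/
def permOfCycles {n : ℕ} (cs : List (List (Fin n))) : Equiv.Perm (Fin n) :=
  (cs.map List.formPerm).prod

def x : Equiv.Perm (Fin 135) := permOfCycles [
  [1, 94, 65, 71, 134, 80, 107, 98, 4],
  [2, 104, 58, 121, 97, 116, 88, 8, 23],
  [3, 69, 36, 32, 29, 73, 102, 128, 106],
  [5, 14, 124, 105, 67, 18, 49, 117, 34],
  [6, 28, 100, 41, 135, 31, 48, 109, 17],
  [7, 133, 112, 53, 91, 15, 25, 122, 129],
  [9, 62, 99, 96, 131, 77, 10, 81, 52],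
  [11, 56, 110, 13, 115, 111, 95, 89, 54],
  [12, 64, 113, 108, 20, 76, 50, 22, 55],
  [16, 61, 83, 118, 75, 66, 39, 35, 132],
  [19, 85, 68, 126, 40, 125, 74, 130, 43],
  [21, 47, 79, 78, 72, 84, 24, 37, 57],
  [26, 38, 70, 90, 92, 103, 63, 120, 44],
  [27, 119, 127, 42, 87, 82, 101, 93, 45],
  [30, 59, 86, 51, 33, 60, 123, 46, 114]]

def y : Equiv.Perm (Fin 135) := permOfCycles [
  [3, 118],
  [4, 110],
  [5, 132],
  [7, 36],
  [9, 33],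
  [10, 46],
  [12, 112],
  [13, 129],
  [16, 65],
  [17, 106],
  [20, 113],
  [21, 107],
  [22, 55],
  [25, 61],
  [26, 27],
  [28, 30],
  [29, 37],
  [31, 109],
  [32, 98],
  [35, 130],
  [40, 42],
  [43, 99],
  [44, 125],
  [45, 90],
  [47, 49],
  [50, 91],
  [51, 93],
  [52, 60],
  [54, 56],
  [58, 116],
  [59, 128],
  [62, 82],
  [63, 73],
  [64, 69],
  [66, 96],
  [67, 78],
  [71, 117],
  [72, 105],
  [74, 124],
  [75, 135],
  [76, 83],
  [77, 121],
  [80, 134],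
  [84, 120],
  [85, 87],
  [86, 103],
  [88, 104],
  [89, 94],
  [95, 122],
  [97, 114],
  [100, 131],
  [119, 127]]

/-!
The 135 points can be labelled by the nonzero singular vectors of the hyperbolic quadratic form on
`𝔽₂⁸` in such a way that `x` and `y` are induced by products of eight and two reflections. The
products of an even number of reflections form the group `Ω⁺(8, 2)`, which contains no reflection
because the fixed space of such a product has even codimension. Conjugation inside `⟨x, y⟩` reaches
all products of two reflections, so `⟨x, y⟩` induces this whole group. Its order comes from a chain
of point stabilizers, and its simplicity from Iwasawa's criterion for the Siegel transformations,
`y` being one of them. For rigidity it suffices to vary `y` with `x` fixed. Every conjugate `y'` of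
`y` is a product of two reflections in vectors whose sum is singular. Whenever `(x y')⁴ = 1`, either
`y'` is conjugate to `y` under a subgroup of order 27 centralizing `x`, or `⟨x, y'⟩` preserves a
cycle of `x` and is not transitive.
-/

section PermutationGroups

open MulAction
open scoped Pointwise

variable {G X : Type*} [Group G]

theorem cycleType_permOfCycles {n : ℕ} {cs : List (List (Fin n))} (hnodup : cs.flatten.Nodup)
    (hlen : ∀ l ∈ cs, 2 ≤ l.length) :
    (permOfCycles cs).cycleType = (cs.map List.length : Multiset ℕ) := by
  obtain ⟨hnodup, hdisjoint⟩ := List.nodup_flatten.mp hnodup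
  rw [permOfCycles, Equiv.Perm.cycleType_eq (cs.map List.formPerm) rfl, List.map_map]
  · congr 1
    refine List.map_congr_left fun l hl => ?_
    rw [Function.comp_apply, Function.comp_apply, List.support_formPerm_of_nodup l (hnodup l hl),
      List.toFinset_card_of_nodup (hnodup l hl)]
    rintro a rfl
    exact absurd (hlen _ hl) (by simp)
  · rw [List.forall_mem_map]
    exact fun l hl => List.isCycle_formPerm (hnodup l hl) (hlen l hl)
  · refine List.pairwise_map.mpr (hdisjoint.imp_of_mem fun {l l'} hl hl' hll' => ?_)
    exact (List.formPerm_disjoint_iff (hnodup l hl) (hnodup l' hl') (hlen l hl)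
      (hlen l' hl')).mpr hll'

theorem ne_alternatingGroup_and_ne_top_of_not_dvd {n p : ℕ} {H : Subgroup (Equiv.Perm (Fin n))}
    (hp : p.Prime) (hpn : p ≤ n) (hH : ¬ p ∣ 2 * Nat.card H) :
    H ≠ alternatingGroup (Fin n) ∧ H ≠ ⊤ := by
  have : Nontrivial (Fin n) := Fin.nontrivial_iff_two_le.mpr (hp.two_le.trans hpn)
  have hdvd : p ∣ Nat.card (Equiv.Perm (Fin n)) := by
    rw [Nat.card_perm, Nat.card_fin]
    exact hp.dvd_factorial.mpr hpn
  constructor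
  · rintro rfl
    exact hH (two_mul_nat_card_alternatingGroup (α := Fin n) ▸ hdvd)
  · rintro rfl
    rw [Subgroup.card_top] at hH
    exact hH (hdvd.mul_left 2)

theorem exists_conj_eq_zpow {H : Subgroup G} {g h : G} (hh : h ∈ H) {m n : ℕ}
    (hg : g ^ n = 1) (hconj : h * g * h⁻¹ = g ^ m)
    (hm : ∀ k : ZMod n, IsUnit k → ∃ i : ℕ, k = m ^ i) {k : ℤ} (hk : Int.gcd k n = 1) :
    ∃ h' ∈ H, h' * g * h'⁻¹ = g ^ k := by
  obtain ⟨i, hi⟩ := hm k ((ZMod.coe_int_isUnit_iff_isCoprime k n).mpr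
    (Int.isCoprime_iff_gcd_eq_one.mpr (Int.gcd_comm k n ▸ hk)))
  have hpow : h ^ i * g * (h ^ i)⁻¹ = g ^ m ^ i := by
    clear hi
    induction i with
    | zero => simp
    | succ i ih =>
      calc h ^ (i + 1) * g * (h ^ (i + 1))⁻¹ = h * (h ^ i * g * (h ^ i)⁻¹) * h⁻¹ := by
            rw [pow_succ']; group
        _ = g ^ m ^ (i + 1) := by rw [ih, ← conj_pow, hconj, ← pow_mul, pow_succ']
  refine ⟨h ^ i, pow_mem hh i, hpow.trans ?_⟩
  have hmod : ((m ^ i : ℕ) : ℤ) ≡ k [ZMOD n] := by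
    rw [← ZMod.intCast_eq_intCast_iff, hi]
    push_cast
    rfl
  rw [← zpow_natCast, zpow_eq_zpow_iff_modEq]
  exact hmod.of_dvd (Int.natCast_dvd_natCast.mpr (orderOf_dvd_of_pow_eq_one hg))

theorem eq_top_of_mem_of_pow_eq_one {a b : G} (hgen : Subgroup.closure {a, b} = ⊤)
    {N : Subgroup G} [N.Normal] (hb : b ∈ N) {m n : ℕ} (hmn : m.Coprime n) (ha : a ^ m = 1)
    (hab : (a * b) ^ n = 1) : N = ⊤ := by
  have hb' : (b : G ⧸ N) = 1 := (QuotientGroup.eq_one_iff b).mpr hb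
  have ha' : (a : G ⧸ N) = 1 := by
    rw [← orderOf_eq_one_iff, ← Nat.dvd_one, ← hmn.gcd_eq_one]
    refine Nat.dvd_gcd (orderOf_dvd_of_pow_eq_one ?_) (orderOf_dvd_of_pow_eq_one ?_)
    · rw [← QuotientGroup.mk_pow, ha, QuotientGroup.mk_one]
    · rw [← mul_one (a : G ⧸ N), ← hb', ← QuotientGroup.mk_mul, ← QuotientGroup.mk_pow, hab]
      exact hb'.symm
  rw [← top_le_iff, ← hgen, Subgroup.closure_le]
  rintro c (rfl | rfl)
  exacts [(QuotientGroup.eq_one_iff c).mp ha', hb]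

theorem exists_normal_isSimpleGroup_centralizer_eq_bot [IsSimpleGroup G] {a b : G}
    (hab : a * b ≠ b * a) :
    ∃ S : Subgroup G, S.Normal ∧ IsSimpleGroup S ∧ (∃ c d : S, c * d ≠ d * c) ∧
      Subgroup.centralizer (S : Set G) = ⊥ := by
  refine ⟨⊤, inferInstance, Subgroup.topEquiv.isSimpleGroup, ⟨⟨a, trivial⟩, ⟨b, trivial⟩, ?_⟩, ?_⟩
  · simpa [Subtype.ext_iff] using hab
  · rw [Subgroup.coe_top, Subgroup.centralizer_univ]
    refine (Subgroup.Normal.eq_bot_or_eq_top inferInstance).resolve_right fun htop => hab ?_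
    exact (Subgroup.mem_center_iff.mp (htop ▸ Subgroup.mem_top b) a)

theorem exists_conj_triple_of_forall_conj {a b : G} {n : ℕ} (hab : (a * b) ^ n = 1)
    (h : ∀ g ∈ Subgroup.closure {a, b}, (a * (g * b * g⁻¹)) ^ n = 1 →
      Subgroup.closure {a, g * b * g⁻¹} = Subgroup.closure {a, b} →
      ∃ f ∈ Subgroup.closure {a, b}, f * a * f⁻¹ = a ∧ f * b * f⁻¹ = g * b * g⁻¹)
    (a' b' c' : G) (habc : a' * b' * c' = 1)
    (hgen : Subgroup.closure {a', b'} = Subgroup.closure {a, b})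
    (ha : ∃ g ∈ Subgroup.closure {a, b}, g * a * g⁻¹ = a')
    (hb : ∃ g ∈ Subgroup.closure {a, b}, g * b * g⁻¹ = b')
    (hc : ∃ g ∈ Subgroup.closure {a, b}, g * (a * b)⁻¹ * g⁻¹ = c') :
    ∃ g ∈ Subgroup.closure {a, b},
      g * a * g⁻¹ = a' ∧ g * b * g⁻¹ = b' ∧ g * (a * b)⁻¹ * g⁻¹ = c' := by
  obtain ⟨k, hk, rfl⟩ := ha
  obtain ⟨l, hl, rfl⟩ := hb
  obtain ⟨m, -, rfl⟩ := hc
  have hconj : a * (k⁻¹ * l * b * (k⁻¹ * l)⁻¹) = k⁻¹ * m * (a * b) * (k⁻¹ * m)⁻¹ := by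
    rw [mul_eq_one_iff_eq_inv] at habc
    calc a * (k⁻¹ * l * b * (k⁻¹ * l)⁻¹) = k⁻¹ * (k * a * k⁻¹ * (l * b * l⁻¹)) * k := by group
      _ = k⁻¹ * m * (a * b) * (k⁻¹ * m)⁻¹ := by rw [habc]; group
  have hgen' : Subgroup.closure {a, k⁻¹ * l * b * (k⁻¹ * l)⁻¹} = Subgroup.closure {a, b} := by
    conv_rhs => rw [← Subgroup.conj_smul_eq_self_of_mem (inv_mem hk), ← hgen, Subgroup.smul_closure,
      ← Set.image_smul, Set.image_pair]
    congr 2 <;> simp [mul_assoc]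
  obtain ⟨f, hf, hfa, hfb⟩ := h (k⁻¹ * l) (mul_mem (inv_mem hk) hl)
    (by rw [hconj, conj_pow, hab, mul_one, mul_inv_cancel]) hgen'
  have ha' : k * f * a * (k * f)⁻¹ = k * a * k⁻¹ := by
    rw [← congrArg (k * · * k⁻¹) hfa]; group
  have hb' : k * f * b * (k * f)⁻¹ = l * b * l⁻¹ := by
    rw [mul_inv_rev, ← mul_assoc, mul_assoc k f b, mul_assoc k (f * b), hfb]; group
  refine ⟨k * f, mul_mem hk hf, ha', hb', ?_⟩
  rw [eq_inv_of_mul_eq_one_right habc, ← ha', ← hb']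
  group

variable [MulAction G X]

theorem card_eq_ncard_orbit_mul_card_inf_stabilizer (H : Subgroup G) (p : X) :
    Nat.card H = (orbit H p).ncard * Nat.card ↥(H ⊓ stabilizer G p) := by
  rw [← index_stabilizer, ← Subgroup.card_mul_index (stabilizer H p), mul_comm]
  congr 1
  have hstab : stabilizer H p = (H ⊓ stabilizer G p).subgroupOf H :=
    Subgroup.ext fun g => (and_iff_right g.2).symm
  rw [hstab]
  exact Nat.card_congr (Subgroup.subgroupOfEquivOfLe inf_le_left).toEquiv

theorem orbit_stabilizer_subgroup (H : Subgroup G) (p q : X) :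
    orbit (stabilizer H p) q = orbit ↥(H ⊓ stabilizer G p) q := by
  ext r
  constructor
  · rintro ⟨⟨g, hg⟩, rfl⟩
    exact ⟨⟨g, g.2, hg⟩, rfl⟩
  · rintro ⟨⟨g, hgH, hg⟩, rfl⟩
    exact ⟨⟨⟨g, hgH⟩, hg⟩, rfl⟩

theorem isPreprimitive_of_card_lt [Finite X] [IsPretransitive G X] (hodd : Odd (Nat.card X)) (p : X)
    (horbit : ∀ q ≠ p, Nat.card X < 3 * ((orbit (stabilizer G p) q).ncard + 1)) :
    MulAction.IsPreprimitive G X := by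
  refine IsPreprimitive.of_isTrivialBlock_base p fun {B} hpB hB => ?_
  refine or_iff_not_imp_left.mpr fun hB' => ?_
  obtain ⟨q, hqB, hqp⟩ := (Set.not_subsingleton_iff.mp hB').exists_ne p
  have hsub : insert p (orbit (stabilizer G p) q) ⊆ B := by
    rintro _ (rfl | ⟨g, rfl⟩)
    · exact hpB
    · have hgB : (g : G) • B = B := hB.smul_eq_of_mem hpB (g.2.symm ▸ hpB)
      exact hgB ▸ Set.smul_mem_smul_set hqB
  have hp : p ∉ orbit (stabilizer G p) q := by
    rintro ⟨g, hg⟩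
    exact hqp (smul_left_cancel (g : G) (hg.trans g.2.symm))
  have hcard := Set.ncard_le_ncard hsub
  rw [Set.ncard_insert_of_notMem hp] at hcard
  obtain ⟨k, hk⟩ := hB.ncard_dvd_card ⟨p, hpB⟩
  have hk3 : k < 3 := by
    have := horbit q hqp
    nlinarith
  have hk1 : k = 1 := by
    have := (Nat.odd_mul.mp (hk ▸ hodd)).2
    grind
  rw [hk1, mul_one, ← Set.ncard_univ] at hk
  exact Set.eq_of_subset_of_ncard_le (Set.subset_univ _) hk.le

theorem eq_univ_of_forall_smul_mem [Finite X] {a b : G}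
    (htrans : IsPretransitive (Subgroup.closure {a, b}) X)
    {S : Set X} (hS : S.Nonempty) (ha : ∀ s ∈ S, a • s ∈ S) (hb : ∀ s ∈ S, b • s ∈ S) :
    S = Set.univ := by
  have hle : Subgroup.closure {a, b} ≤ stabilizer G S := by
    rw [Subgroup.closure_le]
    rintro g (rfl | rfl)
    · exact (mem_stabilizer_set_iff_smul_set_subset S.toFinite).mpr (Set.smul_set_subset_iff.mpr ha)
    · exact (mem_stabilizer_set_iff_smul_set_subset S.toFinite).mpr (Set.smul_set_subset_iff.mpr hb)
  obtain ⟨s, hs⟩ := hS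
  refine Set.eq_univ_of_forall fun t => ?_
  obtain ⟨g, rfl⟩ := exists_smul_eq (Subgroup.closure {a, b}) s t
  exact (mem_stabilizer_set.mp (hle g.2) s).mpr hs

end PermutationGroups

section QuadraticForms

open QuadraticMap

variable {K V : Type*} [Field K] [AddCommGroup V] [Module K V]

/-- The group of linear isometries of a quadratic form. -/
def orthogonalGroup (Q : QuadraticForm K V) : Subgroup (V ≃ₗ[K] V) where
  carrier := {A | ∀ v, Q (A v) = Q v}
  one_mem' _ := rfl
  mul_mem' {_ B} hA hB v := (hA (B v)).trans (hB v)
  inv_mem' {A} hA v := (hA (A.symm v)).symm.trans (congrArg Q (A.apply_symm_apply v))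

/-- The reflection in the hyperplane orthogonal to `a`. It is the identity if `Q a = 0`, because
then `(Q a)⁻¹ = 0`. -/
def reflection (Q : QuadraticForm K V) (a : V) : V ≃ₗ[K] V :=
  LinearEquiv.ofInvolutive (LinearMap.id - ((Q a)⁻¹ • Q.polarBilin a).smulRight a) <| by
    intro v
    by_cases ha : Q a = 0
    · simp [ha]
    · simp only [LinearMap.sub_apply, LinearMap.id_apply, LinearMap.smulRight_apply,
        LinearMap.smul_apply, polarBilin_apply_apply, polar_sub_right, polar_smul_right, polar_self,
        smul_eq_mul]
      match_scalars <;> field_simp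
      ring

/-- The group generated by the products of two reflections in nonsingular vectors. -/
def evenReflectionGroup (Q : QuadraticForm K V) : Subgroup (V ≃ₗ[K] V) :=
  Subgroup.closure {A | ∃ a b, Q a ≠ 0 ∧ Q b ≠ 0 ∧ reflection Q a * reflection Q b = A}

variable {Q : QuadraticForm K V} {A : V ≃ₗ[K] V} {a b p : V}

theorem reflection_apply (v : V) :
    reflection Q a v = v - ((Q a)⁻¹ * polar Q a v) • a := rfl

theorem reflection_mul_self : reflection Q a * reflection Q a = 1 :=
  LinearEquiv.ext fun v => (reflection Q a).symm_apply_apply v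

theorem polar_apply_apply (hA : A ∈ orthogonalGroup Q) (v w : V) :
    polar Q (A v) (A w) = polar Q v w := by
  simp only [polar, ← map_add, hA v, hA w, hA (v + w)]

theorem polar_eq_zero_of_apply_eq_self (hA : A ∈ orthogonalGroup Q) {u : V} (hu : A u = u) (w : V) :
    polar Q u (A w - w) = 0 := by
  rw [polar_sub_right, sub_eq_zero, ← polar_apply_apply hA u w, hu]

theorem reflection_mem_orthogonalGroup : reflection Q a ∈ orthogonalGroup Q := by
  intro v
  by_cases ha : Q a = 0
  · simp [reflection_apply, ha]
  · rw [reflection_apply, sub_eq_add_neg, ← neg_smul, QuadraticMap.map_add Q, polar_smul_right,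
      QuadraticMap.map_smul, polar_comm, smul_eq_mul, smul_eq_mul]
    field_simp
    ring

theorem reflection_eq_self_iff (ha : Q a ≠ 0) {v : V} :
    reflection Q a v = v ↔ polar Q a v = 0 := by
  have ha' : a ≠ 0 := by rintro rfl; exact ha (map_zero Q)
  simp [reflection_apply, ha, ha']

theorem mul_reflection_mul_inv (hA : A ∈ orthogonalGroup Q) :
    A * reflection Q a * A⁻¹ = reflection Q (A a) := by
  refine mul_inv_eq_iff_eq_mul.mpr (LinearEquiv.ext fun v => ?_)
  simp only [LinearEquiv.mul_apply, reflection_apply, map_sub, map_smul, polar_apply_apply hA, hA a]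

theorem evenReflectionGroup_le_orthogonalGroup : evenReflectionGroup Q ≤ orthogonalGroup Q := by
  refine (Subgroup.closure_le _).mpr ?_
  rintro _ ⟨a, b, -, -, rfl⟩
  exact mul_mem reflection_mem_orthogonalGroup reflection_mem_orthogonalGroup

/-- The subspace of vectors fixed by a linear automorphism. -/
def fixedSpace (A : V ≃ₗ[K] V) : Submodule K V := LinearMap.ker (A.toLinearMap - 1)

theorem mem_fixedSpace {v : V} : v ∈ fixedSpace A ↔ A v = v := sub_eq_zero

theorem range_sub_one_eq_orthogonal_fixedSpace [FiniteDimensional K V]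
    (hQ : Q.polarBilin.Nondegenerate) (hA : A ∈ orthogonalGroup Q) :
    LinearMap.range (A.toLinearMap - 1) =
      LinearMap.BilinForm.orthogonal Q.polarBilin (fixedSpace A) := by
  refine Submodule.eq_of_le_of_finrank_eq ?_ ?_
  · rintro _ ⟨w, rfl⟩ u hu
    exact polar_eq_zero_of_apply_eq_self hA (mem_fixedSpace.mp hu) w
  · rw [LinearMap.BilinForm.finrank_orthogonal hQ,
      eq_tsub_iff_add_eq_of_le (Submodule.finrank_le _)]
    exact LinearMap.finrank_range_add_finrank_ker (A.toLinearMap - 1)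

theorem fixedSpace_reflection_mul_eq_sup (hA : A ∈ orthogonalGroup Q) (ha : Q a ≠ 0)
    (hle : ∀ u ∈ fixedSpace A, polar Q a u = 0) {w : V} (hw : A w = w + a) :
    fixedSpace (reflection Q a * A) = fixedSpace A ⊔ K ∙ w := by
  have hpw : polar Q a w = -Q a := by
    have h := hA w
    rw [hw, QuadraticMap.map_add Q, polar_comm] at h
    linear_combination h
  apply le_antisymm
  · intro v hv
    rw [mem_fixedSpace, LinearEquiv.mul_apply, reflection_apply, sub_eq_iff_eq_add] at hv
    set c := (Q a)⁻¹ * polar Q a (A v)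
    refine Submodule.mem_sup.mpr ⟨v - c • w, ?_, c • w,
      Submodule.smul_mem _ c (Submodule.mem_span_singleton_self w), sub_add_cancel v _⟩
    rw [mem_fixedSpace, map_sub, map_smul, hw, hv]
    module
  · refine sup_le (fun u hu => ?_) ((Submodule.span_singleton_le_iff_mem _ _).mpr ?_)
    · rw [mem_fixedSpace, LinearEquiv.mul_apply, mem_fixedSpace.mp hu,
        (reflection_eq_self_iff ha).mpr (hle u hu)]
    · have hpa : polar Q a (w + a) = Q a := by
        rw [polar_add_right, hpw, polar_self]
        ring
      rw [mem_fixedSpace, LinearEquiv.mul_apply, hw, reflection_apply, hpa, inv_mul_cancel₀ ha,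
        one_smul, add_sub_cancel_right]

theorem finrank_fixedSpace_reflection_mul_of_forall [FiniteDimensional K V]
    (hQ : Q.polarBilin.Nondegenerate) (hA : A ∈ orthogonalGroup Q) (ha : Q a ≠ 0)
    (hle : ∀ u ∈ fixedSpace A, polar Q a u = 0) :
    Module.finrank K (fixedSpace (reflection Q a * A)) =
      Module.finrank K (fixedSpace A) + 1 := by
  obtain ⟨w, hw⟩ : a ∈ LinearMap.range (A.toLinearMap - 1) := by
    rw [range_sub_one_eq_orthogonal_fixedSpace hQ hA]
    exact fun u hu => (polar_comm Q u a).trans (hle u hu)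
  have hw : A w - w = a := hw
  have hwA : w ∉ fixedSpace A := fun h => ha <| by
    rw [← hw, mem_fixedSpace.mp h, sub_self, map_zero]
  rw [fixedSpace_reflection_mul_eq_sup hA ha hle (sub_eq_iff_eq_add'.mp hw),
    Submodule.finrank_sup_span_singleton hwA]

theorem odd_finrank_fixedSpace_reflection_mul_add [FiniteDimensional K V]
    (hQ : Q.polarBilin.Nondegenerate) (hA : A ∈ orthogonalGroup Q) (ha : Q a ≠ 0) :
    Odd (Module.finrank K (fixedSpace (reflection Q a * A)) +
      Module.finrank K (fixedSpace A)) := by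
  by_cases hle : ∀ u ∈ fixedSpace A, polar Q a u = 0
  · rw [finrank_fixedSpace_reflection_mul_of_forall hQ hA ha hle]
    exact ⟨_, by ring⟩
  push Not at hle
  obtain ⟨u, hu, hau⟩ := hle
  have hle' : ∀ v ∈ fixedSpace (reflection Q a * A), polar Q a v = 0 := by
    intro v hv
    rw [mem_fixedSpace, LinearEquiv.mul_apply, reflection_apply, sub_eq_iff_eq_add'] at hv
    have hc := polar_eq_zero_of_apply_eq_self hA (mem_fixedSpace.mp hu) v
    rw [hv, add_sub_cancel_right, polar_smul_right, polar_comm Q u a, smul_eq_mul] at hc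
    have hc := (mul_eq_zero.mp hc).resolve_right hau
    rw [hc, zero_smul, zero_add] at hv
    rw [hv] at hc
    exact (mul_eq_zero.mp hc).resolve_left (inv_ne_zero ha)
  have hrank := finrank_fixedSpace_reflection_mul_of_forall hQ
    (mul_mem reflection_mem_orthogonalGroup hA) ha hle'
  rw [← mul_assoc, reflection_mul_self, one_mul] at hrank
  rw [hrank]
  exact ⟨_, by ring⟩

theorem even_finrank_fixedSpace_reflection_mul_reflection_mul_add [FiniteDimensional K V]
    (hQ : Q.polarBilin.Nondegenerate) (hA : A ∈ orthogonalGroup Q) (ha : Q a ≠ 0) (hb : Q b ≠ 0) :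
    Even (Module.finrank K (fixedSpace (reflection Q a * reflection Q b * A)) +
      Module.finrank K (fixedSpace A)) := by
  have hfst := odd_finrank_fixedSpace_reflection_mul_add hQ
    (mul_mem (reflection_mem_orthogonalGroup (a := b)) hA) ha
  have hsnd := odd_finrank_fixedSpace_reflection_mul_add hQ hA hb
  rw [← mul_assoc] at hfst
  grind

theorem even_finrank_fixedSpace_add_finrank [FiniteDimensional K V]
    (hQ : Q.polarBilin.Nondegenerate) (hA : A ∈ evenReflectionGroup Q) :
    Even (Module.finrank K (fixedSpace A) + Module.finrank K V) := by
  induction hA using Subgroup.closure_induction_left with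
  | one =>
    have htop : fixedSpace (1 : V ≃ₗ[K] V) = ⊤ := Submodule.eq_top_iff'.mpr fun v => by
      simp [mem_fixedSpace]
    rw [htop, finrank_top]
    exact ⟨_, rfl⟩
  | mul_left s hs A hA ih =>
    obtain ⟨a, b, ha, hb, rfl⟩ := hs
    have hstep := even_finrank_fixedSpace_reflection_mul_reflection_mul_add hQ
      (evenReflectionGroup_le_orthogonalGroup hA) ha hb
    grind
  | inv_mul_cancel s hs A hA ih =>
    obtain ⟨a, b, ha, hb, rfl⟩ := hs
    have hstep := even_finrank_fixedSpace_reflection_mul_reflection_mul_add hQ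
      (evenReflectionGroup_le_orthogonalGroup hA) hb ha
    rw [mul_inv_rev, inv_eq_of_mul_eq_one_right reflection_mul_self,
      inv_eq_of_mul_eq_one_right reflection_mul_self]
    grind

theorem reflection_notMem_evenReflectionGroup [FiniteDimensional K V]
    (hQ : Q.polarBilin.Nondegenerate) (ha : Q a ≠ 0) : reflection Q a ∉ evenReflectionGroup Q := by
  intro hmem
  have hodd := odd_finrank_fixedSpace_reflection_mul_add hQ (one_mem _) ha
  have hone : Even (Module.finrank K (fixedSpace (1 : V ≃ₗ[K] V)) + Module.finrank K V) :=
    even_finrank_fixedSpace_add_finrank hQ (one_mem _)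
  have heven := even_finrank_fixedSpace_add_finrank hQ hmem
  rw [mul_one] at hodd
  grind

section Generation

variable {M : Subgroup (V ≃ₗ[K] V)} {c d : V}

theorem reflection_mul_reflection_apply_mem (hAM : A ∈ M) (hA : A ∈ orthogonalGroup Q)
    (hAa : reflection Q a * reflection Q (A a) ∈ M) (hc : reflection Q a * reflection Q c ∈ M) :
    reflection Q a * reflection Q (A c) ∈ M := by
  have hconj := mul_mem (mul_mem hAM hc) (inv_mem hAM)
  rw [← conj_mul, mul_reflection_mul_inv hA, mul_reflection_mul_inv hA] at hconj
  have hprod := mul_mem hAa hconj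
  rwa [mul_assoc, ← mul_assoc (reflection Q (A a)), reflection_mul_self, one_mul] at hprod

theorem reflection_mul_reflection_reflection_mem (hd : reflection Q a * reflection Q d ∈ M)
    (hc : reflection Q a * reflection Q c ∈ M) :
    reflection Q a * reflection Q (reflection Q d c) ∈ M := by
  have hprod := mul_mem (mul_mem hd (inv_mem hc)) hd
  rw [← mul_reflection_mul_inv reflection_mem_orthogonalGroup]
  simp only [mul_inv_rev, inv_eq_of_mul_eq_one_right reflection_mul_self] at hprod ⊢
  simpa only [mul_assoc, ← mul_assoc (reflection Q a) (reflection Q a), reflection_mul_self,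
    one_mul] using hprod

theorem evenReflectionGroup_le (h : ∀ c, Q c ≠ 0 → reflection Q a * reflection Q c ∈ M) :
    evenReflectionGroup Q ≤ M := by
  refine (Subgroup.closure_le _).mpr ?_
  rintro _ ⟨c, d, hc, hd, rfl⟩
  have hprod := mul_mem (inv_mem (h c hc)) (h d hd)
  rwa [mul_inv_rev, inv_eq_of_mul_eq_one_right reflection_mul_self, mul_assoc,
    inv_mul_cancel_left] at hprod

end Generation

/-- The isometries fixing `p` and acting trivially on `p^⊥ / ⟨p⟩`. For singular `p` these are the
Siegel transformations with centre `p`. -/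
def siegelSubgroup (Q : QuadraticForm K V) (p : V) : Subgroup (V ≃ₗ[K] V) where
  carrier := {A | A ∈ orthogonalGroup Q ∧ A p = p ∧ ∀ v, polar Q p v = 0 → A v - v ∈ K ∙ p}
  one_mem' := ⟨one_mem _, rfl, fun v _ => by simp⟩
  mul_mem' := by
    rintro A B ⟨hA, hAp, hAv⟩ ⟨hB, hBp, hBv⟩
    refine ⟨mul_mem hA hB, by simp [hBp, hAp], fun v hv => ?_⟩
    have hBv' : polar Q p (B v) = 0 := by rw [← hv, ← polar_apply_apply hB p v, hBp]
    simpa using add_mem (hAv (B v) hBv') (hBv v hv)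
  inv_mem' := by
    rintro A ⟨hA, hAp, hAv⟩
    have hAp' : A⁻¹ p = p := A.symm_apply_eq.mpr hAp.symm
    refine ⟨inv_mem hA, hAp', fun v hv => ?_⟩
    have hv' : polar Q p (A⁻¹ v) = 0 := by
      rw [← hv, ← polar_apply_apply (inv_mem hA) p v, hAp']
    simpa using neg_mem (hAv (A⁻¹ v) hv')

theorem mul_mul_inv_mem_siegelSubgroup {B : V ≃ₗ[K] V} (hA : A ∈ orthogonalGroup Q)
    (hB : B ∈ siegelSubgroup Q p) : A * B * A⁻¹ ∈ siegelSubgroup Q (A p) := by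
  obtain ⟨hBQ, hBp, hBv⟩ := hB
  refine ⟨mul_mem (mul_mem hA hBQ) (inv_mem hA), by simp [hBp], fun v hv => ?_⟩
  obtain ⟨u, rfl⟩ := A.surjective v
  rw [polar_apply_apply hA] at hv
  obtain ⟨c, hc⟩ := Submodule.mem_span_singleton.mp (hBv u hv)
  exact Submodule.mem_span_singleton.mpr ⟨c, by simp [← map_smul, hc]⟩

theorem reflection_mul_reflection_mem_siegelSubgroup (hab : Q a = Q b)
    (hpolar : polar Q a b = 2 * Q a) :
    reflection Q a * reflection Q b ∈ siegelSubgroup Q (a - b) := by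
  refine ⟨mul_mem reflection_mem_orthogonalGroup reflection_mem_orthogonalGroup, ?_, ?_⟩
  · have ha : polar Q a (a - b) = 0 := by simp [polar_sub_right, hpolar]
    have hb : polar Q b (a - b) = 0 := by simp [polar_sub_right, polar_comm Q b a, hpolar, hab]
    simp [reflection_apply, ha, hb]
  · intro v hv
    rw [polar_sub_left, sub_eq_zero] at hv
    refine Submodule.mem_span_singleton.mpr ⟨(Q a)⁻¹ * polar Q a v, ?_⟩
    by_cases ha : Q a = 0
    · simp [reflection_apply, ← hab, ha]
    · simp only [LinearEquiv.mul_apply, reflection_apply, polar_sub_right, polar_smul_right, hpolar,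
        ← hab, ← hv, smul_eq_mul]
      match_scalars <;> field_simp <;> ring

theorem eq_one_of_forall_polar_eq_zero [FiniteDimensional K V]
    (hQ : Q.polarBilin.Nondegenerate) (hA : A ∈ orthogonalGroup Q) (hp : Q p = 0)
    (hfix : ∀ v, polar Q p v = 0 → A v = v) : A = 1 := by
  ext w
  have hmem : A w - w ∈ K ∙ p := by
    have hrefl : LinearMap.BilinForm.IsRefl Q.polarBilin := fun v w h => (polar_comm Q w v).trans h
    rw [← LinearMap.BilinForm.orthogonal_orthogonal hQ hrefl (K ∙ p)]
    exact fun v hv => polar_eq_zero_of_apply_eq_self hA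
      (hfix v (hv p (Submodule.mem_span_singleton_self p))) w
  obtain ⟨c, hc⟩ := Submodule.mem_span_singleton.mp hmem
  have hAw : A w = w + c • p := by rw [hc]; abel
  have hpolar : c * polar Q p w = 0 := by
    have h := hA w
    rw [hAw, QuadraticMap.map_add Q, polar_smul_right, QuadraticMap.map_smul, hp, polar_comm] at h
    simpa using h
  rcases mul_eq_zero.mp hpolar with rfl | h
  · simpa using hAw
  · exact hfix w h

theorem mul_comm_of_mem_siegelSubgroup [FiniteDimensional K V] {B : V ≃ₗ[K] V}
    (hQ : Q.polarBilin.Nondegenerate) (hp : Q p = 0) (hA : A ∈ siegelSubgroup Q p)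
    (hB : B ∈ siegelSubgroup Q p) : A * B = B * A := by
  obtain ⟨hAQ, hAp, hAv⟩ := hA
  obtain ⟨hBQ, hBp, hBv⟩ := hB
  rw [← mul_inv_eq_one]
  refine eq_one_of_forall_polar_eq_zero hQ
    (mul_mem (mul_mem hAQ hBQ) (inv_mem (mul_mem hBQ hAQ))) hp fun v hv => ?_
  obtain ⟨u, rfl⟩ := (B * A).surjective v
  have hu : polar Q p u = 0 := by
    rw [← hv, ← polar_apply_apply (mul_mem hBQ hAQ) p u, LinearEquiv.mul_apply, hAp, hBp]
  obtain ⟨α, hα⟩ := Submodule.mem_span_singleton.mp (hAv u hu)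
  obtain ⟨β, hβ⟩ := Submodule.mem_span_singleton.mp (hBv u hu)
  have hAu : A u = u + α • p := by rw [hα]; abel
  have hBu : B u = u + β • p := by rw [hβ]; abel
  rw [← LinearEquiv.mul_apply, inv_mul_cancel_right]
  simp only [LinearEquiv.mul_apply, hAu, hBu, map_add, map_smul, hAp, hBp]
  abel

end QuadraticForms

section InducedPermutations

variable {K V X : Type*} [Field K] [AddCommGroup V] [Module K V]

theorem semiconj_mul_mul_inv {f : X → V} {g h : Equiv.Perm X} {A B : V ≃ₗ[K] V}
    (hgA : Function.Semiconj f g A) (hhB : Function.Semiconj f h B) :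
    Function.Semiconj f (g * h * g⁻¹) (A * B * A⁻¹ : V ≃ₗ[K] V) :=
  (hgA.comp_right hhB).comp_right
    (hgA.inverses_right g.apply_symm_apply A.symm_apply_apply)

/-- The permutations of `X` which linear automorphisms in `H` induce through a labelling `f` of the
points of `X` by vectors. -/
def inducedPerms (f : X → V) (H : Subgroup (V ≃ₗ[K] V)) : Subgroup (Equiv.Perm X) where
  carrier := {g | ∃ A ∈ H, Function.Semiconj f g A}
  one_mem' := ⟨1, one_mem H, fun _ => rfl⟩
  mul_mem' := fun ⟨A, hA, hgA⟩ ⟨B, hB, hhB⟩ => ⟨A * B, mul_mem hA hB, hgA.comp_right hhB⟩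
  inv_mem' := fun {g} ⟨A, hA, hgA⟩ => ⟨A⁻¹, inv_mem hA,
    hgA.inverses_right g.apply_symm_apply A.symm_apply_apply⟩

/-- The linear automorphisms of `V` which induce permutations in `G` through a labelling `f` of the
points of `X` by vectors. -/
def inducingMaps (K : Type*) [Field K] [Module K V] (f : X → V) (G : Subgroup (Equiv.Perm X)) :
    Subgroup (V ≃ₗ[K] V) where
  carrier := {A | ∃ g ∈ G, Function.Semiconj f g A}
  one_mem' := ⟨1, one_mem G, fun _ => rfl⟩
  mul_mem' := fun ⟨g, hg, hgA⟩ ⟨h, hh, hhB⟩ => ⟨g * h, mul_mem hg hh, hgA.comp_right hhB⟩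
  inv_mem' := fun {A} ⟨g, hg, hgA⟩ => ⟨g⁻¹, inv_mem hg,
    hgA.inverses_right g.apply_symm_apply A.symm_apply_apply⟩

end InducedPermutations

section BitVectors

open QuadraticMap

/-- The hyperbolic quadratic form `v₀v₄ + v₁v₅ + v₂v₆ + v₃v₇` on `𝔽₂⁸`. -/
def hyperbolicForm : QuadraticForm (ZMod 2) (Fin 8 → ZMod 2) :=
  ∑ i : Fin 4, linMulLin (LinearMap.proj (i.castAdd 4)) (LinearMap.proj (i.natAdd 4))

/-- The vector over `𝔽₂` whose coordinates are the binary digits of `n`. -/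
def ofBits (n : ℕ) : Fin 8 → ZMod 2 := fun i => (n.testBit i).toNat

theorem hyperbolicForm_apply (v : Fin 8 → ZMod 2) :
    hyperbolicForm v = ∑ i : Fin 4, v (i.castAdd 4) * v (i.natAdd 4) := by
  simp [hyperbolicForm]

theorem polar_hyperbolicForm (v w : Fin 8 → ZMod 2) : polar hyperbolicForm v w =
    ∑ i : Fin 4, (v (i.castAdd 4) * w (i.natAdd 4) + v (i.natAdd 4) * w (i.castAdd 4)) := by
  simp only [polar, hyperbolicForm_apply, Pi.add_apply, ← Finset.sum_sub_distrib]
  exact Finset.sum_congr rfl fun i _ => by ring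

theorem nondegenerate_polarBilin_hyperbolicForm : hyperbolicForm.polarBilin.Nondegenerate := by
  have hleft : hyperbolicForm.polarBilin.SeparatingLeft := by
    intro v hv
    simp only [polarBilin_apply_apply, polar_hyperbolicForm] at hv
    ext i
    induction i using Fin.addCases (m := 4) (n := 4) with
    | left i =>
      simpa [-Fin.natAdd_eq_addNat, Pi.single_apply] using hv (Fin.append 0 (Pi.single i 1))
    | right i =>
      simpa [-Fin.natAdd_eq_addNat, Pi.single_apply] using
        hv (Fin.append (n := 4) (Pi.single i 1) 0)
  exact ⟨hleft, fun v hv => hleft v fun w => (polar_comm _ v w).trans (hv w)⟩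

theorem ofBits_xor (m n : ℕ) : ofBits (m ^^^ n) = ofBits m + ofBits n := by
  ext i
  simp only [ofBits, Nat.testBit_xor, Pi.add_apply]
  cases m.testBit i <;> cases n.testBit i <;> rfl

theorem injOn_ofBits : Set.InjOn ofBits (Set.Iio 256) := by
  intro m hm n hn hmn
  refine Nat.eq_of_testBit_eq fun i => ?_
  by_cases hi : i < 8
  · have h := congrFun hmn ⟨i, hi⟩
    revert h
    simp only [ofBits]
    cases m.testBit i <;> cases n.testBit i <;> simp
  · rw [not_lt] at hi
    rw [Nat.testBit_lt_two_pow (hm.trans_le (Nat.pow_le_pow_right two_pos hi)),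
      Nat.testBit_lt_two_pow (hn.trans_le (Nat.pow_le_pow_right two_pos hi))]

theorem exists_ofBits_eq (v : Fin 8 → ZMod 2) : ∃ n < 256, ofBits n = v := by
  have hinj : Function.Injective fun n : Fin 256 => ofBits n := fun m n hmn =>
    Fin.ext (injOn_ofBits m.2 n.2 hmn)
  obtain ⟨n, hn⟩ := ((Fintype.bijective_iff_injective_and_card _).mpr ⟨hinj, by simp⟩).2 v
  exact ⟨n, n.2, hn⟩

/-- The hyperbolic form on the vector encoded by `n`, as `0` or `1`: the `k`-th binary digit of
`27030` is the parity of the number of ones in `k < 16`. This and the following functions are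
written with bare operations on `ℕ` in order to evaluate fast in the kernel. -/
def codeForm (n : ℕ) : ℕ :=
  Nat.mod (Nat.shiftRight 27030 (Nat.land (Nat.land n (Nat.shiftRight n 4)) 15)) 2

theorem codeForm_lt_two (n : ℕ) : codeForm n < 2 := Nat.mod_lt _ two_pos

/-- The action of the reflection in the vector encoded by `a` on the vector encoded by `n`, provided
that `codeForm a = 1`. -/
def codeReflect (a n : ℕ) : ℕ :=
  cond (Nat.beq (codeForm (Nat.xor n a)) (codeForm n)) (Nat.xor n a) n

/-- The product of the reflections in the vectors encoded by the entries of `L`. -/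
def reflectionProd (L : List ℕ) : (Fin 8 → ZMod 2) ≃ₗ[ZMod 2] (Fin 8 → ZMod 2) :=
  (L.map fun a => reflection hyperbolicForm (ofBits a)).prod

/-- The action of `reflectionProd L` on codes. -/
def codeReflectList (L : List ℕ) (n : ℕ) : ℕ := L.foldr codeReflect n

/-- The codes of the nonsingular vectors. -/
def nonsingularCodes : List ℕ := (List.range 256).filter fun a => codeForm a = 1

theorem mem_nonsingularCodes {a : ℕ} : a ∈ nonsingularCodes ↔ a < 256 ∧ codeForm a = 1 := by
  simp [nonsingularCodes]

theorem hyperbolicForm_ofBits (n : ℕ) : hyperbolicForm (ofBits n) = codeForm n := by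
  have hparity : ∀ k < 16, ∑ i : Fin 4, ((k.testBit i).toNat : ZMod 2) =
      ((27030 >>> k % 2 : ℕ) : ZMod 2) := by decide
  have hk : (n &&& n >>> 4) &&& 15 < 16 := Nat.and_lt_two_pow _ (n := 4) (by norm_num)
  change _ = ((27030 >>> ((n &&& n >>> 4) &&& 15) % 2 : ℕ) : ZMod 2)
  rw [← hparity _ hk, hyperbolicForm_apply]
  refine Finset.sum_congr rfl fun i _ => ?_
  have hi : Nat.testBit 15 i = true := by fin_cases i <;> rfl
  simp only [ofBits, Nat.testBit_and, Nat.testBit_shiftRight, hi, Fin.val_castAdd, Fin.val_natAdd]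
  cases n.testBit i <;> cases n.testBit (4 + i) <;> rfl

theorem ofBits_codeReflect {a : ℕ} (ha : codeForm a = 1) (n : ℕ) :
    ofBits (codeReflect a n) = reflection hyperbolicForm (ofBits a) (ofBits n) := by
  have hxor : ofBits (Nat.xor n a) = ofBits n + ofBits a := ofBits_xor n a
  have hpolar : polar hyperbolicForm (ofBits a) (ofBits n) =
      codeForm (Nat.xor n a) - 1 - codeForm n := by
    rw [polar, add_comm, ← hxor]
    simp only [hyperbolicForm_ofBits, ha, Nat.cast_one]
  rw [reflection_apply, hpolar, hyperbolicForm_ofBits, ha, codeReflect]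
  generalize Nat.xor n a = m at hxor
  by_cases h : codeForm m = codeForm n
  · simp only [h, Nat.beq_refl, cond_true, hxor, Nat.cast_one, inv_one]
    module
  · have hzero : (codeForm m - 1 - codeForm n : ZMod 2) = 0 := by
      have hm := codeForm_lt_two m
      have hn := codeForm_lt_two n
      generalize codeForm m = k, codeForm n = l at *
      interval_cases k <;> interval_cases l <;> first | contradiction | rfl
    have hbeq : Nat.beq (codeForm m) (codeForm n) = false :=
      Bool.eq_false_iff.mpr (mt Nat.eq_of_beq_eq_true h)
    simp [hzero, hbeq]

theorem codeReflectList_lt {L : List ℕ} (hL : L ⊆ nonsingularCodes) {n : ℕ} (hn : n < 256) :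
    codeReflectList L n < 256 := by
  induction L with
  | nil => exact hn
  | cons a L ih =>
    rw [List.cons_subset, mem_nonsingularCodes] at hL
    have ih := ih hL.2
    rw [codeReflectList, List.foldr_cons, codeReflect, Bool.cond_eq_ite]
    split
    · exact Nat.xor_lt_two_pow (n := 8) ih hL.1.1
    · exact ih

theorem ofBits_codeReflectList {L : List ℕ} (hL : L ⊆ nonsingularCodes) (n : ℕ) :
    ofBits (codeReflectList L n) = reflectionProd L (ofBits n) := by
  induction L with
  | nil => rfl
  | cons a L ih =>
    rw [List.cons_subset, mem_nonsingularCodes] at hL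
    rw [codeReflectList, List.foldr_cons, ofBits_codeReflect hL.1.2, ← codeReflectList, ih hL.2,
      reflectionProd, reflectionProd, List.map_cons, List.prod_cons, LinearEquiv.mul_apply]

theorem exists_nonsingularCode {v : Fin 8 → ZMod 2} (hv : hyperbolicForm v ≠ 0) :
    ∃ n ∈ nonsingularCodes, ofBits n = v := by
  obtain ⟨n, hn, rfl⟩ := exists_ofBits_eq v
  have hlt := codeForm_lt_two n
  have hne : codeForm n ≠ 0 := fun h => hv (by rw [hyperbolicForm_ofBits, h, Nat.cast_zero])
  exact ⟨n, mem_nonsingularCodes.mpr ⟨hn, by omega⟩, rfl⟩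

theorem reflectionProd_append (L M : List ℕ) :
    reflectionProd (L ++ M) = reflectionProd L * reflectionProd M := by
  simp [reflectionProd]

theorem reflectionProd_pair (a b : ℕ) : reflectionProd [a, b] =
    reflection hyperbolicForm (ofBits a) * reflection hyperbolicForm (ofBits b) := by
  simp [reflectionProd]

theorem hyperbolicForm_ofBits_ne_zero {a : ℕ} (ha : a ∈ nonsingularCodes) :
    hyperbolicForm (ofBits a) ≠ 0 := by
  simp [hyperbolicForm_ofBits, (mem_nonsingularCodes.mp ha).2]

theorem reflectionProd_mem_evenReflectionGroup {L : List ℕ} (hL : L ⊆ nonsingularCodes)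
    (heven : Even L.length) : reflectionProd L ∈ evenReflectionGroup hyperbolicForm := by
  induction L using List.twoStepInduction with
  | nil => exact one_mem _
  | singleton a => simp at heven
  | cons_cons a b L ih _ =>
    simp only [List.cons_subset] at hL
    have heven : Even L.length := by simpa [parity_simps] using heven
    change reflectionProd ([a, b] ++ L) ∈ _
    rw [reflectionProd_append, reflectionProd_pair]
    exact mul_mem (Subgroup.subset_closure ⟨_, _, hyperbolicForm_ofBits_ne_zero hL.1,
      hyperbolicForm_ofBits_ne_zero hL.2.1, rfl⟩) (ih hL.2.2 heven)

end BitVectors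

section SingularPoints

/-- The 135 nonzero singular vectors of `hyperbolicForm`, encoded in binary and listed in such an
order that `x` and `y` are induced by isometries. -/
def pointCodes : List ℕ :=
  [1, 16, 2, 220, 217, 32, 20, 222, 208, 52, 14, 210, 5, 93, 4, 88, 129, 249, 44, 18, 213, 245,
    144, 164, 176, 28, 24, 8, 134, 148, 150, 9, 105, 36, 96, 185, 206, 132, 56, 40, 110, 160, 126,
    125, 120, 161, 30, 170, 180, 186, 73, 64, 153, 194, 66, 128, 82, 6, 85, 117, 7, 12, 130, 13, 10,
    15, 193, 225, 90, 26, 60, 65, 97, 131, 157, 159, 174, 37, 111, 74, 179, 72, 146, 190, 41, 115,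
    175, 237, 230, 11, 63, 215, 192, 80, 133, 165, 95, 67, 231, 243, 240, 118, 250, 33, 246, 255,
    103, 123, 102, 135, 87, 112, 155, 75, 205, 22, 219, 207, 204, 189, 183, 171, 59, 252, 3, 104,
    234, 51, 235, 195, 55, 224, 48, 236, 45]

/-- The code of the singular vector which labels the point `t`. -/
def pointCode (t : Fin 135) : ℕ := pointCodes.getD t 0

/-- The singular vector which labels the point `t`. -/
def point (t : Fin 135) : Fin 8 → ZMod 2 := ofBits (pointCode t)

/-- The points labelled by the standard basis of `𝔽₂⁸`. -/
def basePoint : Fin 8 → Fin 135 := ![0, 2, 14, 27, 1, 5, 51, 55]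

/-- Reflections whose product induces `x`. -/
def xCodes : List ℕ := [17, 19, 31, 49, 62, 86, 114, 169]

/-- Reflections whose product induces `y`. -/
def yCodes : List ℕ := [142, 158]

theorem pointCode_lt : ∀ t, pointCode t < 256 := by decide +kernel

theorem pointCode_injective : Function.Injective pointCode := by decide +kernel

theorem point_basePoint : ∀ i, point (basePoint i) = Pi.single i 1 := by decide

theorem point_injective : Function.Injective point := fun s t hst =>
  pointCode_injective (injOn_ofBits (pointCode_lt s) (pointCode_lt t) hst)

theorem eq_of_forall_basePoint {A B : (Fin 8 → ZMod 2) ≃ₗ[ZMod 2] (Fin 8 → ZMod 2)}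
    (h : ∀ i, A (point (basePoint i)) = B (point (basePoint i))) : A = B :=
  (Pi.basisFun (ZMod 2) (Fin 8)).ext' fun i => by
    simpa only [Pi.basisFun_apply, ← point_basePoint] using h i

/-- The permutation `g` of the points is induced by the product of the reflections in `L`. -/
def Realizes (g : Equiv.Perm (Fin 135)) (L : List ℕ) : Prop :=
  Function.Semiconj point g (reflectionProd L)

variable {g h : Equiv.Perm (Fin 135)} {L M : List ℕ}

theorem realizes_iff (hL : L ⊆ nonsingularCodes) :
    Realizes g L ↔ ∀ t, pointCode (g t) = codeReflectList L (pointCode t) := by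
  refine forall_congr' fun t => ?_
  rw [point, point, ← ofBits_codeReflectList hL]
  exact injOn_ofBits.eq_iff (pointCode_lt _) (codeReflectList_lt hL (pointCode_lt t))

theorem reflectionProd_eq (hL : L ⊆ nonsingularCodes) (hM : M ⊆ nonsingularCodes)
    (hLM : ∀ i, codeReflectList L (pointCode (basePoint i)) =
      codeReflectList M (pointCode (basePoint i))) : reflectionProd L = reflectionProd M :=
  eq_of_forall_basePoint fun i => by
    rw [point, ← ofBits_codeReflectList hL, hLM, ofBits_codeReflectList hM]

theorem Realizes.mul (hg : Realizes g L) (hh : Realizes h M) : Realizes (g * h) (L ++ M) := by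
  rw [Realizes, reflectionProd_append]
  exact hg.comp_right hh

theorem Realizes.perm_eq (hg : Realizes g L) (hh : Realizes h M)
    (hLM : reflectionProd L = reflectionProd M) : g = h :=
  Equiv.ext fun t => point_injective <| by
    rw [Function.Semiconj.eq hg, Function.Semiconj.eq hh, hLM]

theorem realizes_x : Realizes x xCodes := (realizes_iff (by decide +kernel)).mpr (by decide +kernel)

theorem realizes_y : Realizes y yCodes := (realizes_iff (by decide +kernel)).mpr (by decide +kernel)

theorem closure_le_inducedPerms :
    Subgroup.closure {x, y} ≤ inducedPerms point (evenReflectionGroup hyperbolicForm) := by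
  rw [Subgroup.closure_le]
  rintro g (rfl | rfl)
  · exact ⟨_, reflectionProd_mem_evenReflectionGroup (by decide +kernel) (by decide), realizes_x⟩
  · exact ⟨_, reflectionProd_mem_evenReflectionGroup (by decide +kernel) (by decide), realizes_y⟩

end SingularPoints

section Reachability

variable {α : Type*} [DecidableEq α] {gens : List (α → α)} {a b : α} {k : ℕ}

/-- The values at `a` of the words of length at most `k` in the maps `gens`. -/
def reachable (gens : List (α → α)) (a : α) : ℕ → List α
  | 0 => [a]
  | k + 1 => gens.foldr (fun f T => (reachable gens a k).map f ∪ T) (reachable gens a k)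

theorem of_mem_reachable {P : α → Prop} (hgens : ∀ f ∈ gens, ∀ b, P b → P (f b)) (ha : P a)
    (hb : b ∈ reachable gens a k) : P b := by
  induction k generalizing b with
  | zero => rwa [List.mem_singleton.mp hb]
  | succ k ih =>
    rw [reachable] at hb
    generalize reachable gens a k = S at ih hb
    induction gens with
    | nil => exact ih hb
    | cons f gens ih' =>
      rw [List.foldr_cons, List.mem_union_iff, List.mem_map] at hb
      rcases hb with ⟨c, hc, rfl⟩ | hb
      · exact hgens f List.mem_cons_self c (ih hc)
      · exact ih' (fun f hf => hgens f (List.mem_cons_of_mem _ hf)) hb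

end Reachability

section Generation

variable {L : List ℕ}

theorem x_mem_closure : x ∈ Subgroup.closure {x, y} := Subgroup.subset_closure (by simp)

theorem y_mem_closure : y ∈ Subgroup.closure {x, y} := Subgroup.subset_closure (by simp)

theorem reflectionProd_flatten_mem {Ls : List (List ℕ)} (hLs : Ls ⊆ [xCodes, yCodes]) :
    reflectionProd Ls.flatten ∈ inducingMaps (ZMod 2) point (Subgroup.closure {x, y}) := by
  induction Ls with
  | nil => exact one_mem _
  | cons L Ls ih =>
    rw [List.cons_subset] at hLs
    rw [List.flatten_cons, reflectionProd_append]
    refine mul_mem ?_ (ih hLs.2)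
    rcases List.mem_pair.mp hLs.1 with rfl | rfl
    · exact ⟨x, x_mem_closure, realizes_x⟩
    · exact ⟨y, y_mem_closure, realizes_y⟩

-- The square of `x` takes the vector `142` to the vector `147`, and `(x² y x⁻² y)²` is induced by
-- the product of the reflections in these two vectors.
theorem reflection_mul_reflection_sq_apply_mem : reflection hyperbolicForm (ofBits 142) *
    reflection hyperbolicForm (reflectionProd (xCodes ++ xCodes) (ofBits 142)) ∈
      inducingMaps (ZMod 2) point (Subgroup.closure {x, y}) := by
  have hword : reflectionProd [142, 147] = reflectionProd (List.replicate 2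
      ([xCodes, xCodes, yCodes] ++ List.replicate 7 xCodes ++ [yCodes])).flatten.flatten :=
    reflectionProd_eq (by decide +kernel) (by decide +kernel) (by decide +kernel)
  have himage : codeReflectList (xCodes ++ xCodes) 142 = 147 := by decide +kernel
  rw [← ofBits_codeReflectList (by decide +kernel), himage, ← reflectionProd_pair, hword]
  exact reflectionProd_flatten_mem (by decide +kernel)

theorem reflection_mul_reflection_mem {c : Fin 8 → ZMod 2} (hc : hyperbolicForm c ≠ 0) :
    reflection hyperbolicForm (ofBits 142) * reflection hyperbolicForm c ∈
      inducingMaps (ZMod 2) point (Subgroup.closure {x, y}) := by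
  let S := reflectionProd (xCodes ++ xCodes)
  have hS : S ∈ inducingMaps (ZMod 2) point (Subgroup.closure {x, y}) := by
    simpa [S] using reflectionProd_flatten_mem (Ls := [xCodes, xCodes]) (by simp)
  have hSorth : S ∈ orthogonalGroup hyperbolicForm := evenReflectionGroup_le_orthogonalGroup
    (reflectionProd_mem_evenReflectionGroup (by decide +kernel) (by decide))
  have h142 : reflection hyperbolicForm (ofBits 142) * reflection hyperbolicForm (ofBits 142) ∈
      inducingMaps (ZMod 2) point (Subgroup.closure {x, y}) := by
    rw [reflection_mul_self]
    exact one_mem _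
  have h158 : reflection hyperbolicForm (ofBits 142) * reflection hyperbolicForm (ofBits 158) ∈
      inducingMaps (ZMod 2) point (Subgroup.closure {x, y}) := by
    rw [← reflectionProd_pair]
    exact reflectionProd_flatten_mem (Ls := [yCodes]) (by simp)
  have hreach : ∀ n ∈ nonsingularCodes, n ∈ reachable
      [codeReflectList (xCodes ++ xCodes), codeReflect 142, codeReflect 158] 142 13 := by
    decide +kernel
  obtain ⟨n, hn, rfl⟩ := exists_nonsingularCode hc
  refine of_mem_reachable (P := fun n => reflection hyperbolicForm (ofBits 142) *
    reflection hyperbolicForm (ofBits n) ∈ _) ?_ h142 (hreach n hn)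
  simp only [List.forall_mem_cons, List.not_mem_nil, IsEmpty.forall_iff, implies_true, and_true]
  refine ⟨fun b hb => ?_, fun b hb => ?_, fun b hb => ?_⟩
  · rw [ofBits_codeReflectList (by decide +kernel)]
    exact reflection_mul_reflection_apply_mem hS hSorth reflection_mul_reflection_sq_apply_mem hb
  · rw [ofBits_codeReflect (by decide)]
    exact reflection_mul_reflection_reflection_mem h142 hb
  · rw [ofBits_codeReflect (by decide)]
    exact reflection_mul_reflection_reflection_mem h158 hb

theorem exists_realizes (hL : L ⊆ nonsingularCodes) (heven : Even L.length) :
    ∃ g ∈ Subgroup.closure {x, y}, Realizes g L :=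
  evenReflectionGroup_le (fun _ => reflection_mul_reflection_mem)
    (reflectionProd_mem_evenReflectionGroup hL heven)

end Generation

section Order

variable {g : Equiv.Perm (Fin 135)}

theorem codeForm_xor_apply_apply (hg : g ∈ Subgroup.closure {x, y}) (s t : Fin 135) :
    codeForm (pointCode (g s) ^^^ pointCode (g t)) = codeForm (pointCode s ^^^ pointCode t) := by
  obtain ⟨A, hA, hgA⟩ := closure_le_inducedPerms hg
  have hform : (codeForm (pointCode (g s) ^^^ pointCode (g t)) : ZMod 2) =
      codeForm (pointCode s ^^^ pointCode t) := by
    rw [← hyperbolicForm_ofBits, ← hyperbolicForm_ofBits, ofBits_xor, ofBits_xor]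
    change hyperbolicForm (point (g s) + point (g t)) = hyperbolicForm (point s + point t)
    rw [hgA s, hgA t, ← map_add, evenReflectionGroup_le_orthogonalGroup hA]
  rw [ZMod.natCast_eq_natCast_iff'] at hform
  simpa only [Nat.mod_eq_of_lt (codeForm_lt_two _)] using hform

/-- The subgroup of `⟨x, y⟩` fixing every point of `l`. -/
def pointwiseStabilizer (l : List (Fin 135)) : Subgroup (Equiv.Perm (Fin 135)) :=
  l.foldr (fun p K => K ⊓ MulAction.stabilizer (Equiv.Perm (Fin 135)) p) (Subgroup.closure {x, y})

theorem mem_pointwiseStabilizer {l : List (Fin 135)} :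
    g ∈ pointwiseStabilizer l ↔ g ∈ Subgroup.closure {x, y} ∧ ∀ b ∈ l, g b = b := by
  induction l with
  | nil => simp [pointwiseStabilizer]
  | cons p l ih =>
    rw [pointwiseStabilizer, List.foldr_cons, ← pointwiseStabilizer, Subgroup.mem_inf, ih,
      MulAction.mem_stabilizer_iff, Equiv.Perm.smul_def, List.forall_mem_cons]
    tauto

theorem card_pointwiseStabilizer (l : List (Fin 135)) (p : Fin 135) :
    Nat.card (pointwiseStabilizer l) = (MulAction.orbit (pointwiseStabilizer l) p).ncard *
      Nat.card (pointwiseStabilizer (p :: l)) :=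
  card_eq_ncard_orbit_mul_card_inf_stabilizer _ _

/-- The points outside `l` which have the same inner products as `p` with the points of `l`. -/
def similarPoints (l : List (Fin 135)) (p : Fin 135) : Finset (Fin 135) :=
  {t | t ∉ l ∧ l.all fun b => codeForm (pointCode b ^^^ pointCode t) =
    codeForm (pointCode b ^^^ pointCode p)}

theorem apply_mem_similarPoints {l : List (Fin 135)} {p : Fin 135} (hp : p ∉ l)
    (hg : g ∈ pointwiseStabilizer l) : g p ∈ similarPoints l p := by
  obtain ⟨hg, hfix⟩ := mem_pointwiseStabilizer.mp hg
  refine Finset.mem_filter.mpr ⟨Finset.mem_univ _, fun hgp => hp ?_,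
    List.all_eq_true.mpr fun b hb => decide_eq_true ?_⟩
  · rwa [g.injective (hfix _ hgp)] at hgp
  · rw [← codeForm_xor_apply_apply hg b p, hfix b hb]

theorem orbit_pointwiseStabilizer {l : List (Fin 135)} {p : Fin 135} (hp : p ∉ l)
    (gens : List (List ℕ)) (k : ℕ)
    (hgens : ∀ L ∈ gens, L ⊆ nonsingularCodes ∧ Even L.length ∧
      ∀ b ∈ l, codeReflectList L (pointCode b) = pointCode b)
    (hreach : ∀ t ∈ similarPoints l p,
      pointCode t ∈ reachable (gens.map codeReflectList) (pointCode p) k) :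
    MulAction.orbit (pointwiseStabilizer l) p = similarPoints l p := by
  refine Set.Subset.antisymm ?_ fun t ht => ?_
  · rintro _ ⟨g, rfl⟩
    exact apply_mem_similarPoints hp g.2
  suffices h : ∃ s ∈ MulAction.orbit (pointwiseStabilizer l) p, pointCode s = pointCode t by
    obtain ⟨s, hs, hst⟩ := h
    rwa [← pointCode_injective hst]
  refine of_mem_reachable (P := fun n =>
    ∃ s ∈ MulAction.orbit (pointwiseStabilizer l) p, pointCode s = n) ?_
    ⟨p, MulAction.mem_orbit_self p, rfl⟩ (hreach t ht)
  rintro _ hf _ ⟨s, hs, rfl⟩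
  obtain ⟨L, hL, rfl⟩ := List.mem_map.mp hf
  obtain ⟨hcodes, heven, hfix⟩ := hgens L hL
  obtain ⟨g, hg, hgL⟩ := exists_realizes hcodes heven
  rw [realizes_iff hcodes] at hgL
  have hgfix : g ∈ pointwiseStabilizer l := mem_pointwiseStabilizer.mpr
    ⟨hg, fun b hb => pointCode_injective ((hgL b).trans (hfix b hb))⟩
  exact ⟨g s, MulAction.mem_orbit_of_mem_orbit (⟨g, hgfix⟩ : pointwiseStabilizer l) hs, hgL s⟩

theorem orbit_pointwiseStabilizer_nil :
    MulAction.orbit (pointwiseStabilizer []) (0 : Fin 135) = similarPoints [] 0 :=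
  orbit_pointwiseStabilizer (by decide) [xCodes, yCodes] 15 (by decide +kernel) (by decide +kernel)

theorem orbit_pointwiseStabilizer_zero {p : Fin 135} (hp : p = 1 ∨ p = 2) :
    MulAction.orbit (pointwiseStabilizer [0]) p = similarPoints [0] p := by
  rcases hp with rfl | rfl <;>
  exact orbit_pointwiseStabilizer (by decide) [[46, 173, 139, 140], [226, 143, 228, 101]] 10
    (by decide +kernel) (by decide +kernel)

-- The only nontrivial isometry fixing the six vectors is a reflection.
theorem pointwiseStabilizer_eq_bot : pointwiseStabilizer [51, 14, 5, 2, 1, 0] = ⊥ := by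
  refine (Subgroup.eq_bot_iff_forall _).mpr fun g hg => ?_
  have himage : similarPoints [51, 14, 5, 2, 1, 0] 27 = {27, 55} ∧
      similarPoints [51, 14, 5, 2, 1, 0] 55 = {27, 55} := by decide +kernel
  have h27 := apply_mem_similarPoints (p := 27) (by decide) hg
  have h55 := apply_mem_similarPoints (p := 55) (by decide) hg
  simp only [himage, Finset.mem_insert, Finset.mem_singleton] at h27 h55
  obtain ⟨hg, hfix⟩ := mem_pointwiseStabilizer.mp hg
  obtain ⟨A, hA, hgA⟩ := closure_le_inducedPerms hg
  have hne : g 27 ≠ g 55 := fun h => absurd (g.injective h) (by decide)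
  rcases h27 with h27 | h27
  · have h55 : g 55 = 55 := h55.resolve_left fun h => hne (h27.trans h.symm)
    have hA1 : A = 1 := eq_of_forall_basePoint fun i => by
      rw [← hgA.eq, LinearEquiv.coe_one, id]
      congr 1
      fin_cases i <;> first | exact hfix _ (by decide) | assumption
    exact Equiv.ext fun t => point_injective (by rw [hgA.eq, hA1]; rfl)
  · have h55 : g 55 = 27 := h55.resolve_right fun h => hne (h27.trans h.symm)
    have hAr : A = reflectionProd [136] := eq_of_forall_basePoint fun i => by
      rw [← hgA.eq, point, point, ← ofBits_codeReflectList (by decide +kernel)]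
      congr 1
      fin_cases i <;> first
        | exact (congrArg pointCode (hfix _ (by decide))).trans (by decide +kernel)
        | exact (congrArg pointCode (by assumption)).trans (by decide +kernel)
    refine absurd hA ?_
    rw [hAr, reflectionProd, List.map_singleton, List.prod_singleton]
    exact reflection_notMem_evenReflectionGroup nondegenerate_polarBilin_hyperbolicForm
      (hyperbolicForm_ofBits_ne_zero (by decide +kernel))

theorem card_closure : Nat.card (Subgroup.closure {x, y}) = 174182400 := by
  have h2 := orbit_pointwiseStabilizer (l := [1, 0]) (p := 2) (by decide)
    [[42, 38, 106, 168], [238, 166]] 12 (by decide +kernel) (by decide +kernel)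
  have h5 := orbit_pointwiseStabilizer (l := [2, 1, 0]) (p := 5) (by decide)
    [[138, 140, 196, 136], [68, 142]] 5 (by decide +kernel) (by decide +kernel)
  have h14 := orbit_pointwiseStabilizer (l := [5, 2, 1, 0]) (p := 14) (by decide)
    [[76, 136], [200, 140]] 4 (by decide +kernel) (by decide +kernel)
  have h51 := orbit_pointwiseStabilizer (l := [14, 5, 2, 1, 0]) (p := 51) (by decide)
    [[17, 21, 25, 29], [17, 21, 145, 149]] 2 (by decide +kernel) (by decide +kernel)
  have hcard : (similarPoints [] 0).card = 135 ∧ (similarPoints [0] 1).card = 64 ∧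
      (similarPoints [1, 0] 2).card = 35 ∧ (similarPoints [2, 1, 0] 5).card = 16 ∧
      (similarPoints [5, 2, 1, 0] 14).card = 9 ∧ (similarPoints [14, 5, 2, 1, 0] 51).card = 4 := by
    decide +kernel
  change Nat.card (pointwiseStabilizer []) = _
  rw [card_pointwiseStabilizer [] 0, card_pointwiseStabilizer _ 1, card_pointwiseStabilizer _ 2,
    card_pointwiseStabilizer _ 5, card_pointwiseStabilizer _ 14, card_pointwiseStabilizer _ 51,
    orbit_pointwiseStabilizer_nil, orbit_pointwiseStabilizer_zero (Or.inl rfl), h2, h5, h14, h51,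
    pointwiseStabilizer_eq_bot]
  simp only [Set.ncard_coe_finset, hcard, Subgroup.card_bot]

end Order

section CycleTypes

/-- The nontrivial cycles of `x * y`. -/
def xyCycles : List (List (Fin 135)) :=
  [[0, 66, 131, 41], [1, 94, 54, 110], [2, 104, 8, 23], [3, 75, 31, 17], [4, 13, 7, 32],
    [5, 16, 71, 34], [6, 28, 59, 106], [10, 114, 116, 121], [12, 53, 91, 22], [14, 124, 130, 132],
    [15, 25, 83, 50], [18, 49, 79, 78], [19, 85, 82, 99], [21, 98, 29, 57], [24, 37, 73, 120],
    [26, 119, 42, 125], [27, 38, 70, 90], [30, 100, 77, 97], [33, 62, 101, 93], [35, 43, 96, 39],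
    [36, 133, 112, 64], [40, 87, 68, 126], [44, 74, 105, 84], [45, 92, 103, 51], [46, 81, 52, 123],
    [47, 117, 134, 107], [61, 122, 89, 65], [63, 102, 128, 86], [69, 113, 76, 118],
    [95, 129, 115, 111], [9, 60], [11, 56], [20, 108], [48, 109], [58, 88], [67, 72]]

theorem x_mul_y_eq : x * y = permOfCycles xyCycles :=
  (realizes_x.mul realizes_y).perm_eq
    ((realizes_iff (by decide +kernel)).mpr (by decide +kernel)) rfl

theorem cycleType_x : x.cycleType = Multiset.replicate 15 9 :=
  cycleType_permOfCycles (by decide +kernel) (by decide +kernel)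

theorem cycleType_y : y.cycleType = Multiset.replicate 52 2 :=
  cycleType_permOfCycles (by decide +kernel) (by decide +kernel)

theorem cycleType_x_mul_y :
    (x * y).cycleType = Multiset.replicate 30 4 + Multiset.replicate 6 2 := by
  rw [x_mul_y_eq, xyCycles, cycleType_permOfCycles (by decide +kernel) (by decide +kernel)]
  decide +kernel

theorem orderOf_x : orderOf x = 9 := by
  rw [← Equiv.Perm.lcm_cycleType, cycleType_x]
  decide +kernel

theorem orderOf_y : orderOf y = 2 := by
  rw [← Equiv.Perm.lcm_cycleType, cycleType_y]
  decide +kernel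

theorem orderOf_x_mul_y : orderOf (x * y) = 4 := by
  rw [← Equiv.Perm.lcm_cycleType, cycleType_x_mul_y]
  decide +kernel

theorem permInd_add_permInd_add_permInd :
    permInd x + permInd y + permInd (x * y)⁻¹ = 2 * (135 - 1) := by
  rw [permInd, permInd, permInd, Equiv.Perm.cycleType_inv, cycleType_x, cycleType_y,
    cycleType_x_mul_y]
  simp

end CycleTypes

section Primitivity

theorem isPretransitive_closure :
    MulAction.IsPretransitive (Subgroup.closure {x, y}) (Fin 135) := by
  rw [MulAction.isPretransitive_iff_orbit_eq_univ (0 : Fin 135)]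
  refine orbit_pointwiseStabilizer_nil.trans ?_
  rw [← Finset.coe_univ]
  exact congrArg _ (by decide +kernel)

theorem isPreprimitive_closure :
    MulAction.IsPreprimitive (Subgroup.closure {x, y}) (Fin 135) := by
  have := isPretransitive_closure
  refine isPreprimitive_of_card_lt (by rw [Nat.card_fin]; decide) (0 : Fin 135) fun q hq => ?_
  have hcover : ∀ q ≠ 0, q ∈ similarPoints [0] 1 ∨ q ∈ similarPoints [0] 2 := by decide +kernel
  have hcard : (similarPoints [0] 1).card = 64 ∧ (similarPoints [0] 2).card = 70 := by
    decide +kernel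
  obtain ⟨p, hp, hqp⟩ : ∃ p, (p = 1 ∨ p = 2) ∧ q ∈ similarPoints [0] p := by
    simpa using hcover q hq
  rw [← Finset.mem_coe, ← orbit_pointwiseStabilizer_zero hp, ← MulAction.orbit_eq_iff,
    orbit_pointwiseStabilizer_zero hp] at hqp
  rw [orbit_stabilizer_subgroup]
  change _ < 3 * ((MulAction.orbit (pointwiseStabilizer [0]) q).ncard + 1)
  rw [hqp, Set.ncard_coe_finset, Nat.card_eq_fintype_card, Fintype.card_fin]
  rcases hp with rfl | rfl <;> omega

end Primitivity

section Simplicity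

open scoped Pointwise commutatorElement

variable {g h : Equiv.Perm (Fin 135)}

theorem eq_top_of_y_mem {N : Subgroup (Subgroup.closure {x, y})} [N.Normal]
    (hN : ⟨y, y_mem_closure⟩ ∈ N) : N = ⊤ := by
  have hgen : Subgroup.closure {⟨x, x_mem_closure⟩, ⟨y, y_mem_closure⟩} =
      (⊤ : Subgroup (Subgroup.closure {x, y})) := by
    rw [← Subgroup.closure_closure_coe_preimage]
    congr 1
    ext g
    simp [Subtype.ext_iff]
  refine eq_top_of_mem_of_pow_eq_one (m := 9) (n := 4) hgen hN (by decide) ?_ ?_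
  · exact Subtype.ext (orderOf_x ▸ pow_orderOf_eq_one x)
  · exact Subtype.ext (orderOf_x_mul_y ▸ pow_orderOf_eq_one (x * y))

theorem commutator_closure_eq_top : commutator (Subgroup.closure {x, y}) = ⊤ := by
  obtain ⟨u, hu, hureal⟩ := exists_realizes (L := [142, 42]) (by decide +kernel) (by decide)
  obtain ⟨v, hv, hvreal⟩ := exists_realizes (L := [50, 34]) (by decide +kernel) (by decide)
  have hcomm : u * v = y * (v * u) :=
    (hureal.mul hvreal).perm_eq (realizes_y.mul (hvreal.mul hureal))
      (reflectionProd_eq (by decide +kernel) (by decide +kernel) (by decide +kernel))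
  have hy : (⟨y, y_mem_closure⟩ : Subgroup.closure {x, y}) =
      ⁅(⟨u, hu⟩ : Subgroup.closure {x, y}), (⟨v, hv⟩ : Subgroup.closure {x, y})⁆ := by
    rw [commutatorElement_def, eq_mul_inv_iff_mul_eq, eq_mul_inv_iff_mul_eq, mul_assoc]
    exact Subtype.ext hcomm.symm
  apply eq_top_of_y_mem
  rw [hy]
  exact Subgroup.commutator_mem_commutator (Subgroup.mem_top _) (Subgroup.mem_top _)

theorem hyperbolicForm_point (t : Fin 135) : hyperbolicForm (point t) = 0 := by
  have hzero : ∀ t, codeForm (pointCode t) = 0 := by decide +kernel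
  rw [point, hyperbolicForm_ofBits, hzero, Nat.cast_zero]

/-- The permutations induced by the Siegel transformations centred at the vector which labels
`p`. -/
def siegelPerms (p : Fin 135) : Subgroup (Equiv.Perm (Fin 135)) :=
  inducedPerms point (siegelSubgroup hyperbolicForm (point p))

theorem mul_comm_of_mem_siegelPerms {p : Fin 135} (hg : g ∈ siegelPerms p)
    (hh : h ∈ siegelPerms p) : g * h = h * g := by
  obtain ⟨A, hA, hgA⟩ := hg
  obtain ⟨B, hB, hhB⟩ := hh
  refine Equiv.ext fun t => point_injective ?_
  have hAB := mul_comm_of_mem_siegelSubgroup nondegenerate_polarBilin_hyperbolicForm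
    (hyperbolicForm_point p) hA hB
  exact ((hgA.comp_right hhB) t).trans <| (LinearEquiv.congr_fun hAB _).trans
    ((hhB.comp_right hgA) t).symm

theorem mul_mul_inv_mem_siegelPerms {p : Fin 135} (hg : g ∈ Subgroup.closure {x, y})
    (hh : h ∈ siegelPerms p) : g * h * g⁻¹ ∈ siegelPerms (g p) := by
  obtain ⟨A, hA, hgA⟩ := closure_le_inducedPerms hg
  obtain ⟨B, hB, hhB⟩ := hh
  refine ⟨A * B * A⁻¹, ?_, semiconj_mul_mul_inv hgA hhB⟩
  rw [hgA.eq]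
  exact mul_mul_inv_mem_siegelSubgroup (evenReflectionGroup_le_orthogonalGroup hA) hB

theorem y_mem_siegelPerms : y ∈ siegelPerms 1 := by
  have hsub : ofBits 142 - ofBits 158 = point 1 := by decide +kernel
  refine ⟨reflectionProd yCodes, ?_, realizes_y⟩
  rw [yCodes, reflectionProd_pair, ← hsub]
  apply reflection_mul_reflection_mem_siegelSubgroup
  · simp only [hyperbolicForm_ofBits]
    decide
  · simp only [QuadraticMap.polar, ← ofBits_xor, hyperbolicForm_ofBits]
    decide

theorem iSup_siegelPerms_subgroupOf :
    ⨆ p, (siegelPerms p).subgroupOf (Subgroup.closure {x, y}) = ⊤ := by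
  have hnormal : Subgroup.normalClosure {(⟨y, y_mem_closure⟩ : Subgroup.closure {x, y})} = ⊤ :=
    eq_top_of_y_mem (Subgroup.subset_normalClosure (Set.mem_singleton _))
  rw [← top_le_iff, ← hnormal, Subgroup.normalClosure, Subgroup.closure_le]
  intro h hh
  obtain ⟨s, hs, hconj⟩ := Group.mem_conjugatesOfSet_iff.mp hh
  obtain ⟨g, rfl⟩ := isConj_iff.mp hconj
  rw [Set.mem_singleton_iff.mp hs]
  exact Subgroup.mem_iSup_of_mem (g.1 1) (mul_mul_inv_mem_siegelPerms g.2 y_mem_siegelPerms)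

/-- The Siegel transformations form an Iwasawa structure on `⟨x, y⟩`. -/
def siegelIwasawaStructure :
    MulAction.IwasawaStructure (Subgroup.closure {x, y}) (Fin 135) where
  T p := (siegelPerms p).subgroupOf _
  is_comm p := ⟨⟨fun g h => Subtype.ext <| Subtype.ext <| mul_comm_of_mem_siegelPerms g.2 h.2⟩⟩
  is_conj g p := by
    ext h
    rw [Subgroup.mem_pointwise_smul_iff_inv_smul_mem]
    refine ⟨fun hh => ?_, fun hh => ?_⟩
    · have hconj := mul_mul_inv_mem_siegelPerms (inv_mem g.2) hh
      rwa [← Equiv.Perm.smul_def, Subgroup.smul_def, inv_smul_smul, inv_inv] at hconj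
    · have hconj := mul_mul_inv_mem_siegelPerms g.2 hh
      change (h : Equiv.Perm (Fin 135)) ∈ siegelPerms (g.1 p)
      simpa [mul_assoc] using hconj
  is_generator := iSup_siegelPerms_subgroupOf

theorem isSimpleGroup_closure : IsSimpleGroup (Subgroup.closure {x, y}) := by
  have := isPreprimitive_closure
  have : Nontrivial (Subgroup.closure {x, y}) :=
    Finite.one_lt_card_iff_nontrivial.mp (by rw [card_closure]; norm_num)
  exact siegelIwasawaStructure.isSimpleGroup commutator_closure_eq_top inferInstance

theorem x_mul_y_ne_y_mul_x : x * y ≠ y * x := fun h => by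
  have horder := Commute.orderOf_mul_eq_mul_orderOf_of_coprime h
    (by rw [orderOf_x, orderOf_y]; decide)
  rw [orderOf_x_mul_y, orderOf_x, orderOf_y] at horder
  omega

end Simplicity

section RationalClasses

theorem exists_conj_x_eq_zpow {k : ℤ} (hk : Int.gcd k (orderOf x) = 1) :
    ∃ h ∈ Subgroup.closure {x, y}, h * x * h⁻¹ = x ^ k := by
  obtain ⟨h, hh, hreal⟩ := exists_realizes (L := [23, 81, 106, 124, 212, 221])
    (by decide +kernel) (by decide)
  have hconj : h * x = x * (x * h) :=
    (hreal.mul realizes_x).perm_eq (realizes_x.mul (realizes_x.mul hreal))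
      (reflectionProd_eq (by decide +kernel) (by decide +kernel) (by decide +kernel))
  have hpow : ∀ k : ZMod 9, IsUnit k → ∃ i : Fin 6, k = (2 : ℕ) ^ (i : ℕ) := by decide +kernel
  refine exists_conj_eq_zpow hh (orderOf_x ▸ pow_orderOf_eq_one x) (m := 2) ?_
    (fun k hk => (hpow k hk).imp' _ fun _ => id) (orderOf_x ▸ hk)
  rw [hconj, sq]
  group

theorem exists_conj_y_eq_zpow {k : ℤ} (hk : Int.gcd k (orderOf y) = 1) :
    ∃ h ∈ Subgroup.closure {x, y}, h * y * h⁻¹ = y ^ k :=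
  exists_conj_eq_zpow (one_mem _) (by rw [← orderOf_y, pow_orderOf_eq_one] : y ^ 2 = 1) (m := 1)
    (by simp) (fun k hk => ⟨0, by revert k; decide⟩) (orderOf_y ▸ hk)

theorem exists_conj_x_mul_y_inv_eq_zpow {k : ℤ} (hk : Int.gcd k (orderOf (x * y)⁻¹) = 1) :
    ∃ h ∈ Subgroup.closure {x, y}, h * (x * y)⁻¹ * h⁻¹ = (x * y)⁻¹ ^ k := by
  obtain ⟨h, hh, hreal⟩ := exists_realizes (L := [38, 70, 198, 199])
    (by decide +kernel) (by decide)
  have hconj : x * y * (h * (x * y)) = h :=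
    ((realizes_x.mul realizes_y).mul (hreal.mul (realizes_x.mul realizes_y))).perm_eq hreal
      (reflectionProd_eq (by decide +kernel) (by decide +kernel) (by decide +kernel))
  have hpow : ∀ k : ZMod 4, IsUnit k → ∃ i : Fin 2, k = (3 : ℕ) ^ (i : ℕ) := by decide +kernel
  have horder : (x * y)⁻¹ ^ 4 = 1 := by
    rw [inv_pow, ← orderOf_x_mul_y, pow_orderOf_eq_one, inv_one]
  refine exists_conj_eq_zpow hh horder (m := 3) ?_
    (fun k hk => (hpow k hk).imp' _ fun _ => id) (orderOf_x_mul_y ▸ orderOf_inv (x * y) ▸ hk)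
  rw [eq_inv_of_mul_eq_one_left ((pow_succ _ 3).symm.trans horder), inv_inv, mul_inv_eq_iff_eq_mul,
    mul_inv_eq_iff_eq_mul, mul_assoc, hconj]

end RationalClasses

section Rigidity

variable {g h : Equiv.Perm (Fin 135)} {L : List ℕ} {a b : ℕ}

theorem Realizes.pow (hg : Realizes g L) (n : ℕ) :
    Realizes (g ^ n) (List.replicate n L).flatten := by
  induction n with
  | zero => exact fun _ => rfl
  | succ n ih =>
    rw [pow_succ', List.replicate_succ, List.flatten_cons]
    exact hg.mul ih

theorem realizes_pair_conj {A : (Fin 8 → ZMod 2) ≃ₗ[ZMod 2] (Fin 8 → ZMod 2)}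
    (hA : A ∈ orthogonalGroup hyperbolicForm) (hhA : Function.Semiconj point h A) {c d : ℕ}
    (hg : Realizes g [a, b]) (hc : ofBits c = A (ofBits a)) (hd : ofBits d = A (ofBits b)) :
    Realizes (h * g * h⁻¹) [c, d] := by
  have hconj := semiconj_mul_mul_inv hhA hg
  rwa [reflectionProd_pair, ← conj_mul, mul_reflection_mul_inv hA, mul_reflection_mul_inv hA, ← hc,
    ← hd, ← reflectionProd_pair] at hconj

theorem realizes_y_swap : Realizes y [158, 142] := by
  have hswap : reflectionProd [158, 142] = reflectionProd yCodes :=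
    reflectionProd_eq (by decide +kernel) (by decide +kernel) (by decide +kernel)
  rw [Realizes, hswap]
  exact realizes_y

theorem exists_realizes_conj_y (hg : g ∈ Subgroup.closure {x, y}) :
    ∃ a ∈ nonsingularCodes, ∃ b ∈ nonsingularCodes, a < b ∧ codeForm (a ^^^ b) = 0 ∧
      Realizes (g * y * g⁻¹) [a, b] := by
  obtain ⟨A, hA, hgA⟩ := closure_le_inducedPerms hg
  have hAorth := evenReflectionGroup_le_orthogonalGroup hA
  have hne : ∀ n ∈ nonsingularCodes, hyperbolicForm (A (ofBits n)) ≠ 0 := fun n hn => by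
    rw [hAorth]
    exact hyperbolicForm_ofBits_ne_zero hn
  obtain ⟨a, ha, hAa⟩ := exists_nonsingularCode (hne 142 (by decide +kernel))
  obtain ⟨b, hb, hAb⟩ := exists_nonsingularCode (hne 158 (by decide +kernel))
  have hab : codeForm (a ^^^ b) = 0 := by
    have hcast : (codeForm (a ^^^ b) : ZMod 2) = 0 := by
      rw [← hyperbolicForm_ofBits, ofBits_xor, hAa, hAb, ← map_add, hAorth, ← ofBits_xor,
        hyperbolicForm_ofBits]
      decide
    rw [ZMod.natCast_eq_zero_iff] at hcast
    exact Nat.eq_zero_of_dvd_of_lt hcast (codeForm_lt_two _)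
  have hne : a ≠ b := by
    rintro rfl
    exact absurd (A.injective (hAa.symm.trans hAb)) (by decide)
  rcases hne.lt_or_gt with hlt | hlt
  · exact ⟨a, ha, b, hb, hlt, hab, realizes_pair_conj hAorth hgA realizes_y hAa hAb⟩
  · exact ⟨b, hb, a, ha, hlt, Nat.xor_comm a b ▸ hab,
      realizes_pair_conj hAorth hgA realizes_y_swap hAb hAa⟩

/-- Reflections whose product has order `3` and commutes with `x`. -/
def centralizingCodes : List ℕ := [42, 79]

/-- Reflections whose product induces `x ^ m * d ^ k`, where `d` is induced by
`centralizingCodes`. -/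
def centralizerWord (m k : ℕ) : List ℕ :=
  (List.replicate m xCodes).flatten ++ (List.replicate k centralizingCodes).flatten

/-- The product of the reflections in `a` and `b` is the conjugate of `y` by the element that some
`centralizerWord` induces. -/
def IsCentralizerConjugate (a b : ℕ) : Prop :=
  ∃ m < 9, ∃ k < 3, [a, b] ∈
    [[142, 158], [158, 142]].map (List.map (codeReflectList (centralizerWord m k)))

/-- The product of the reflections in `a` and `b` preserves the cycle of `x` through `t`. -/
def PreservesCycle (a b : ℕ) (t : Fin 135) : Prop :=
  ∀ m < 9, ∃ k < 9, codeReflectList [a, b] ((codeReflectList xCodes)^[m] (pointCode t)) =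
    (codeReflectList xCodes)^[k] (pointCode t)

instance (a b : ℕ) : Decidable (IsCentralizerConjugate a b) :=
  inferInstanceAs (Decidable (∃ _ < _, _))

instance (a b : ℕ) (t : Fin 135) : Decidable (PreservesCycle a b t) :=
  inferInstanceAs (Decidable (∀ _ < _, _))

theorem isCentralizerConjugate_or_preservesCycle :
    ∀ a ∈ nonsingularCodes, ∀ b ∈ nonsingularCodes, a < b → codeForm (a ^^^ b) = 0 →
    (∀ i, (codeReflectList (xCodes ++ [a, b]))^[4] (pointCode (basePoint i)) =
      pointCode (basePoint i)) →
    IsCentralizerConjugate a b ∨ ∃ t ∈ [10, 51, 1], PreservesCycle a b t := by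
  decide +kernel

theorem Realizes.pointCode_pow (hg : Realizes g L) (hL : L ⊆ nonsingularCodes) (n : ℕ)
    (t : Fin 135) : pointCode ((g ^ n) t) = (codeReflectList L)^[n] (pointCode t) := by
  rw [Equiv.Perm.coe_pow]
  exact Function.Semiconj.iterate_right ((realizes_iff hL).mp hg) n t

theorem PreservesCycle.not_isPretransitive {t : Fin 135} (ht : PreservesCycle a b t)
    (hab : [a, b] ⊆ nonsingularCodes) (hg : Realizes g [a, b]) :
    ¬ MulAction.IsPretransitive (Subgroup.closure {x, g}) (Fin 135) := fun htrans => by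
  have hx := realizes_x.pointCode_pow (by decide +kernel)
  have hmod (n : ℕ) : x ^ (n % 9) = x ^ n := by rw [← orderOf_x, pow_mod_orderOf]
  have hcycle : Set.range (fun m : Fin 9 => (x ^ (m : ℕ)) t) = Set.univ := by
    refine eq_univ_of_forall_smul_mem htrans (Set.range_nonempty _) ?_ ?_ <;> rintro _ ⟨m, rfl⟩
    · refine ⟨⟨(m + 1) % 9, Nat.mod_lt _ (by norm_num)⟩, ?_⟩
      dsimp only
      rw [hmod, pow_succ', Equiv.Perm.mul_apply, Equiv.Perm.smul_def]
    · obtain ⟨k, hk, hkm⟩ := ht m m.2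
      refine ⟨⟨k, hk⟩, pointCode_injective ?_⟩
      rw [hx, ← hkm, ← hx]
      exact ((realizes_iff hab).mp hg _).symm
  have hcard := Finite.card_range_le fun m : Fin 9 => (x ^ (m : ℕ)) t
  rw [hcycle, Nat.card_univ, Nat.card_fin, Nat.card_fin] at hcard
  exact absurd hcard (by norm_num)

theorem centralizerWord_subset_and_even_length : ∀ m < 9, ∀ k < 3,
    centralizerWord m k ⊆ nonsingularCodes ∧ Even (centralizerWord m k).length := by
  decide +kernel

theorem IsCentralizerConjugate.exists_conj (hab : IsCentralizerConjugate a b)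
    (hg : Realizes g [a, b]) :
    ∃ f ∈ Subgroup.closure {x, y}, f * x * f⁻¹ = x ∧ f * y * f⁻¹ = g := by
  obtain ⟨m, hm, k, hk, hmk⟩ := hab
  obtain ⟨hword, heven⟩ := centralizerWord_subset_and_even_length m hm k hk
  obtain ⟨d, hd, hdreal⟩ := exists_realizes (L := centralizingCodes)
    (by decide +kernel) (by decide)
  have hdx : Commute d x := (hdreal.mul realizes_x).perm_eq (realizes_x.mul hdreal)
    (reflectionProd_eq (by decide +kernel) (by decide +kernel) (by decide +kernel))
  have hf : Realizes (x ^ m * d ^ k) (centralizerWord m k) :=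
    (realizes_x.pow m).mul (hdreal.pow k)
  have horth : reflectionProd (centralizerWord m k) ∈ orthogonalGroup hyperbolicForm :=
    evenReflectionGroup_le_orthogonalGroup (reflectionProd_mem_evenReflectionGroup hword heven)
  have hconj : Realizes (x ^ m * d ^ k * y * (x ^ m * d ^ k)⁻¹) [a, b] := by
    simp only [List.map_cons, List.map_nil, List.mem_cons, List.cons.injEq, List.not_mem_nil,
      and_true, or_false] at hmk
    obtain ⟨rfl, rfl⟩ | ⟨rfl, rfl⟩ := hmk
    · exact realizes_pair_conj horth hf realizes_y (ofBits_codeReflectList hword _)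
        (ofBits_codeReflectList hword _)
    · exact realizes_pair_conj horth hf realizes_y_swap (ofBits_codeReflectList hword _)
        (ofBits_codeReflectList hword _)
  have hcomm : Commute (x ^ m * d ^ k) x := ((Commute.refl x).pow_left m).mul_left (hdx.pow_left k)
  exact ⟨x ^ m * d ^ k, mul_mem (pow_mem x_mem_closure m) (pow_mem hd k),
    mul_inv_eq_iff_eq_mul.mpr hcomm.eq, hconj.perm_eq hg rfl⟩

theorem exists_conj_y_eq_conj_y_of_pow_eq_one (hg : g ∈ Subgroup.closure {x, y})
    (hpow : (x * (g * y * g⁻¹)) ^ 4 = 1)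
    (hgen : Subgroup.closure {x, g * y * g⁻¹} = Subgroup.closure {x, y}) :
    ∃ f ∈ Subgroup.closure {x, y}, f * x * f⁻¹ = x ∧ f * y * f⁻¹ = g * y * g⁻¹ := by
  obtain ⟨a, ha, b, hb, hlt, horth, hreal⟩ := exists_realizes_conj_y hg
  have hab : [a, b] ⊆ nonsingularCodes := by simp [ha, hb]
  have hfour : ∀ i, (codeReflectList (xCodes ++ [a, b]))^[4] (pointCode (basePoint i)) =
      pointCode (basePoint i) := fun i => by
    rw [← (realizes_x.mul hreal).pointCode_pow
      (List.append_subset.mpr ⟨by decide +kernel, hab⟩), hpow]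
    rfl
  obtain hconj | ⟨t, -, ht⟩ := isCentralizerConjugate_or_preservesCycle a ha b hb hlt horth hfour
  · exact hconj.exists_conj hreal
  · have htrans := isPretransitive_closure
    rw [← hgen] at htrans
    exact absurd htrans (ht.not_isPretransitive hab hreal)

end Rigidity

theorem nice_triple_deg135_stmt11 :
    IsNice x y (x * y)⁻¹ ∧
    x.cycleType = Multiset.replicate 15 9 ∧
    y.cycleType = Multiset.replicate 52 2 ∧
    ((x * y)⁻¹).cycleType = Multiset.replicate 30 4 + Multiset.replicate 6 2 ∧
    Nat.card ↥(Subgroup.closure {x, y} : Subgroup (Equiv.Perm (Fin 135))) = 174182400 := by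
  have := isPreprimitive_closure
  have := isSimpleGroup_closure
  refine ⟨⟨mul_inv_cancel _, ?_, ⟨inferInstance, fun B hB => ?_⟩, ?_,
    permInd_add_permInd_add_permInd, ?_, ?_⟩, cycleType_x, cycleType_y,
    (Equiv.Perm.cycleType_inv _).trans cycleType_x_mul_y, card_closure⟩
  · exact ne_alternatingGroup_and_ne_top_of_not_dvd (p := 11) (by norm_num) (by norm_num)
      (by rw [card_closure]; norm_num)
  · exact MulAction.IsPreprimitive.isTrivialBlock_of_isBlock hB
  · exact exists_normal_isSimpleGroup_centralizer_eq_bot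
      (a := ⟨x, x_mem_closure⟩) (b := ⟨y, y_mem_closure⟩) (mt Subtype.ext_iff.mp x_mul_y_ne_y_mul_x)
  · exact exists_conj_triple_of_forall_conj (orderOf_x_mul_y ▸ pow_orderOf_eq_one (x * y))
      fun g hg => exists_conj_y_eq_conj_y_of_pow_eq_one hg
  · rintro g (rfl | rfl | rfl) k hk
    exacts [exists_conj_x_eq_zpow hk, exists_conj_y_eq_zpow hk, exists_conj_x_mul_y_inv_eq_zpow hk]
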